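/- There exists an absolute constant c > 0 such that the following holds. Let q be a prime power, δ ∈ (0,1), and let M ∈ F_q^{n×k} with rows v_1,…,v_n be (together with matchings H_1,…,H_k) a linear (2,δ)-LDC over F_q of block length n and dimension k ≥ 2. Then for every x ∈ F_q^k there exists a subset I ⊆ [n] with |I| ≤ c·q·δ^{-1}·log₂ k such that x lies in the F_q-linear span of {v_i : i ∈ I}. -/

import Mathlib

/-- A linear `(2, δ)`-LDC over a finite field `F` of block length `n` and
dimension `k`: a matrix with rows `v 1, …, v n ∈ Fᵏ` together with `2`-uniform
matchings `H i` over `[n]` of size at least `δ·n`, for `i ∈ [k]`, such that for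
every pair `{a,b} ∈ H i` there are nonzero `α, β ∈ F` with
`e_i = α·v a + β·v b`, where `e_i` is the `i`-th standard basis vector. -/
def IsLinearLDC2 (F : Type) [Field F] {n k : ℕ} (δ : ℝ)
    (v : Fin n → Fin k → F) (H : Fin k → Finset (Finset (Fin n))) : Prop :=
  (∀ i : Fin k, ∀ e ∈ H i, e.card = 2) ∧
  (∀ i : Fin k, ∀ e ∈ H i, ∀ e' ∈ H i, e ≠ e' → Disjoint e e') ∧
  (∀ i : Fin k, δ * n ≤ ((H i).card : ℝ)) ∧
  (∀ i : Fin k, ∀ e ∈ H i, ∀ a ∈ e, ∀ b ∈ e, a ≠ b →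
    ∃ α β : F, α ≠ 0 ∧ β ≠ 0 ∧
      (Pi.single i (1 : F) : Fin k → F) = α • v a + β • v b)

open Classical in
/-- Canonical reduction: vectors `y b`, each a combination of two rows, supported on `S`,
still satisfying the decoding relations for `i ∈ S`. -/
lemma ldc_reduce (F : Type) [Field F] {n k : ℕ} (v : Fin n → Fin k → F) (S : Finset (Fin k)) :
    ∃ (r : Fin n → Fin n) (t : Fin n → F),
      (∀ b, ∀ j, j ∉ S → v b j - t b * v (r b) j = 0) ∧
      (∀ a b : Fin n, ∀ i ∈ S, ∀ α β : F, α ≠ 0 → β ≠ 0 →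
        (Pi.single i (1 : F) : Fin k → F) = α • v a + β • v b →
        α * (v a i - t a * v (r a) i) + β * (v b i - t b * v (r b) i) = 1) := by
  let P : (Fin k → F) →ₗ[F] ({j // j ∉ S} → F) := LinearMap.funLeft F F Subtype.val
  let st : Setoid (Fin n) :=
    { r := fun a b => ∃ t : F, t ≠ 0 ∧ P (v a) = t • P (v b)
      iseqv := by
        refine ⟨fun a => ⟨1, one_ne_zero, by simp⟩, ?_, ?_⟩
        · rintro a b ⟨t, ht, h⟩
          exact ⟨t⁻¹, inv_ne_zero ht, by rw [h, smul_smul, inv_mul_cancel₀ ht, one_smul]⟩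
        · rintro a b c ⟨t, ht, h⟩ ⟨s, hs, h'⟩
          exact ⟨t * s, mul_ne_zero ht hs, by rw [h, h', smul_smul]⟩ }
  let r : Fin n → Fin n := fun b => (Quotient.mk st b).out
  have hr : ∀ b, ∃ t : F, t ≠ 0 ∧ P (v b) = t • P (v (r b)) := fun b =>
    st.iseqv.symm (Quotient.mk_out (s := st) b)
  choose t0 ht0 hP0 using hr
  let t : Fin n → F := fun b => if P (v b) = 0 then 0 else t0 b
  have hP : ∀ b, P (v b) = t b • P (v (r b)) := by
    intro b
    by_cases h : P (v b) = 0
    · simp [t, h]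
    · simp only [t, h, if_false]; exact hP0 b
  refine ⟨r, t, ?_, ?_⟩
  · intro b j hj
    have := congrFun (hP b) ⟨j, hj⟩
    simp only [P, LinearMap.funLeft_apply, Pi.smul_apply, smul_eq_mul] at this
    rw [this, sub_self]
  · intro a b i hi α β hα hβ h
    have h1 : α • P (v a) + β • P (v b) = 0 := by
      rw [← map_smul, ← map_smul, ← map_add, ← h]
      ext ⟨j, hj⟩
      have : j ≠ i := fun e => hj (e ▸ hi)
      simp [P, LinearMap.funLeft_apply, this]
    have h2 : P (v a) = (-(α⁻¹ * β)) • P (v b) := by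
      have : α⁻¹ • (α • P (v a) + β • P (v b)) = 0 := by rw [h1, smul_zero]
      rw [smul_add, smul_smul, smul_smul, inv_mul_cancel₀ hα, one_smul] at this
      rw [neg_smul]; exact eq_neg_of_add_eq_zero_left this
    have hrr : r a = r b := by
      have : Quotient.mk st a = Quotient.mk st b :=
        Quotient.sound (s := st) ⟨_, neg_ne_zero.2 (mul_ne_zero (inv_ne_zero hα) hβ), h2⟩
      simp only [r, this]
    have ht : α * t a + β * t b = 0 := by
      by_cases hb : P (v b) = 0
      · have ha : P (v a) = 0 := by rw [h2, hb, smul_zero]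
        simp [t, ha, hb]
      · have hne : P (v (r b)) ≠ 0 := by
          intro h0; apply hb; rw [hP b, h0, smul_zero]
        rw [hP a, hP b, hrr, smul_smul, smul_smul, ← add_smul] at h1
        exact (smul_eq_zero.1 h1).resolve_right hne
    have h3 := congrFun h i
    simp only [Pi.single_eq_same, Pi.add_apply, Pi.smul_apply, smul_eq_mul] at h3
    rw [hrr]
    linear_combination -h3 - v (r b) i * ht

open Classical in
/-- Some reduced vector has large support inside `S`. -/
lemma ldc_heavy (F : Type) [Field F] {n k : ℕ} (δ : ℝ) (hn : 1 ≤ n)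
    (v : Fin n → Fin k → F) (H : Fin k → Finset (Finset (Fin n)))
    (hL : IsLinearLDC2 F δ v H) (S : Finset (Fin k)) :
    ∃ (a b : Fin n) (t : F), (∀ j, j ∉ S → v b j - t * v a j = 0) ∧
      δ * S.card ≤ ((S.filter (fun i => v b i - t * v a i ≠ 0)).card : ℝ) := by
  obtain ⟨r, t, h0, h1⟩ := ldc_reduce F v S
  obtain ⟨hc, hd, hs, he⟩ := hL
  have key : ∀ i ∈ S, (H i).card ≤
      (Finset.univ.filter (fun b => v b i - t b * v (r b) i ≠ 0)).card := by
    intro i hi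
    have hex : ∀ e ∈ H i, ∃ b ∈ e, v b i - t b * v (r b) i ≠ 0 := by
      intro e hee
      obtain ⟨a, b, hab, rfl⟩ := Finset.card_eq_two.1 (hc i e hee)
      obtain ⟨α, β, hα, hβ, h⟩ := he i _ hee a (by simp) b (by simp) hab
      have := h1 a b i hi α β hα hβ h
      by_contra! hcon
      rw [hcon a (by simp), hcon b (by simp)] at this
      simp at this
    have : Nonempty (Fin n) := ⟨⟨0, hn⟩⟩
    choose! g hg hg' using hex
    apply Finset.card_le_card_of_injOn g
    · intro e hee; simpa using hg' e hee
    · intro e hee e' hee' hgg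
      by_contra hne
      exact Finset.disjoint_left.1 (hd i e hee e' hee' hne) (hg e hee) (hgg ▸ hg e' hee')
  have hsum : ∑ b : Fin n, (S.filter (fun i => v b i - t b * v (r b) i ≠ 0)).card
      = ∑ i ∈ S, (Finset.univ.filter (fun b => v b i - t b * v (r b) i ≠ 0)).card := by
    simp only [Finset.card_filter]
    exact Finset.sum_comm
  have hle : ∑ b : Fin n, δ * (S.card : ℝ) ≤
      ∑ b : Fin n, ((S.filter (fun i => v b i - t b * v (r b) i ≠ 0)).card : ℝ) := by
    rw [← Nat.cast_sum, hsum, Nat.cast_sum]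
    calc ∑ b : Fin n, δ * (S.card : ℝ) = ∑ i ∈ S, δ * n := by simp; ring
      _ ≤ _ := Finset.sum_le_sum fun i hi => (hs i).trans (by exact_mod_cast key i hi)
  obtain ⟨b, -, hb⟩ := Finset.exists_le_of_sum_le ⟨⟨0, hn⟩, Finset.mem_univ _⟩ hle
  exact ⟨r b, b, t b, h0 b, hb⟩

open Classical in
/-- One step: reduce the weight of `x` by a factor `1 - δ/q` using two rows. -/
lemma ldc_step (F : Type) [Field F] [Fintype F] {n k : ℕ} (δ : ℝ) (hn : 1 ≤ n)
    (v : Fin n → Fin k → F) (H : Fin k → Finset (Finset (Fin n)))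
    (hL : IsLinearLDC2 F δ v H) (x : Fin k → F) :
    ∃ (a b : Fin n) (s t : F),
      ((Finset.univ.filter (fun i => (x - s • (v b - t • v a)) i ≠ 0)).card : ℝ) ≤
        (1 - δ / Fintype.card F) * (Finset.univ.filter (fun i => x i ≠ 0)).card := by
  set S := Finset.univ.filter (fun i => x i ≠ 0) with hS
  obtain ⟨a, b, t, h0, h1⟩ := ldc_heavy F δ hn v H hL S
  set D := S.filter (fun i => v b i - t * v a i ≠ 0) with hD
  let f : Fin k → F := fun i => x i / (v b i - t * v a i)
  have hq : (0 : ℝ) < Fintype.card F := by exact_mod_cast Fintype.card_pos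
  obtain ⟨s, hs⟩ : ∃ s : F, (D.card : ℝ) / Fintype.card F ≤ (D.filter (fun i => f i = s)).card := by
    have h := Finset.card_eq_sum_card_fiberwise (s := D) (t := Finset.univ) (f := f)
      (by intro i _; simp)
    have : ∑ s : F, (D.card : ℝ) / Fintype.card F ≤
        ∑ s : F, ((D.filter (fun i => f i = s)).card : ℝ) := by
      rw [← Nat.cast_sum, ← h]
      simp only [Finset.sum_const, Finset.card_univ, nsmul_eq_mul]
      rw [mul_div_cancel₀ _ hq.ne']
    obtain ⟨s, -, hs⟩ := Finset.exists_le_of_sum_le ⟨0, Finset.mem_univ _⟩ this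
    exact ⟨s, hs⟩
  refine ⟨a, b, s, t, ?_⟩
  have hsub : Finset.univ.filter (fun i => (x - s • (v b - t • v a)) i ≠ 0) ⊆
      S \ D.filter (fun i => f i = s) := by
    intro i hi
    simp only [Finset.mem_filter, Finset.mem_univ, true_and, Pi.sub_apply, Pi.smul_apply,
      smul_eq_mul] at hi
    rw [Finset.mem_sdiff]
    constructor
    · by_contra hiS
      apply hi
      rw [h0 i hiS]
      simpa [hS] using hiS
    · intro hf
      rw [Finset.mem_filter, hD, Finset.mem_filter] at hf
      apply hi
      rw [← hf.2]
      simp only [f]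
      rw [div_mul_cancel₀ _ hf.1.2, sub_self]
  have hss : D.filter (fun i => f i = s) ⊆ S :=
    (Finset.filter_subset _ _).trans (Finset.filter_subset _ _)
  have hc := Finset.card_le_card hsub
  rw [Finset.card_sdiff_of_subset hss] at hc
  have hc2 := Finset.card_le_card hss
  have hc' : ((Finset.univ.filter (fun i => (x - s • (v b - t • v a)) i ≠ 0)).card : ℝ) ≤
      S.card - (D.filter (fun i => f i = s)).card := by
    rw [← Nat.cast_sub hc2]; exact_mod_cast hc
  have : δ * S.card / Fintype.card F ≤ (D.card : ℝ) / Fintype.card F := by gcongr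
  calc _ ≤ _ := hc'
    _ ≤ S.card - δ * S.card / Fintype.card F := by linarith
    _ = _ := by ring

open Classical in
lemma ldc_iter (F : Type) [Field F] [Fintype F] {n k : ℕ} (δ : ℝ) (hn : 1 ≤ n)
    (hδ : 0 ≤ 1 - δ / Fintype.card F)
    (v : Fin n → Fin k → F) (H : Fin k → Finset (Finset (Fin n)))
    (hL : IsLinearLDC2 F δ v H) (T : ℕ) : ∀ x : Fin k → F,
    (1 - δ / Fintype.card F) ^ T * ((Finset.univ.filter (fun i => x i ≠ 0)).card : ℝ) < 1 →
    ∃ I : Finset (Fin n), I.card ≤ 2 * T ∧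
      x ∈ Submodule.span F (v '' (I : Set (Fin n))) := by
  induction T with
  | zero =>
    intro x hx
    refine ⟨∅, by simp, ?_⟩
    have h0 : (Finset.univ.filter (fun i => x i ≠ 0)).card = 0 := by
      rw [pow_zero, one_mul] at hx
      have : (Finset.univ.filter (fun i => x i ≠ 0)).card < 1 := by exact_mod_cast hx
      omega
    have : x = 0 := by
      ext i
      by_contra hi
      have : i ∈ Finset.univ.filter (fun i => x i ≠ 0) := by simpa using hi
      rw [Finset.card_eq_zero.1 h0] at this
      simp at this
    rw [this]; exact Submodule.zero_mem _
  | succ T ih =>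
    intro x hx
    obtain ⟨a, b, s, t, h⟩ := ldc_step F δ hn v H hL x
    obtain ⟨I, hI, hm⟩ := ih (x - s • (v b - t • v a)) (by
      refine lt_of_le_of_lt (mul_le_mul_of_nonneg_left h (pow_nonneg hδ T)) ?_
      rw [← mul_assoc, ← pow_succ]; exact hx)
    refine ⟨insert a (insert b I), ?_, ?_⟩
    · have h1 := Finset.card_insert_le a (insert b I)
      have h2 := Finset.card_insert_le b I
      omega
    · have e : x = (x - s • (v b - t • v a)) + s • (v b - t • v a) := by abel
      rw [e]
      have ha : v a ∈ Submodule.span F (v '' ((insert a (insert b I) : Finset (Fin n)) : Set (Fin n))) :=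
        Submodule.subset_span ⟨a, by simp, rfl⟩
      have hb : v b ∈ Submodule.span F (v '' ((insert a (insert b I) : Finset (Fin n)) : Set (Fin n))) :=
        Submodule.subset_span ⟨b, by simp, rfl⟩
      refine Submodule.add_mem _ (Submodule.span_mono (Set.image_mono ?_) hm)
        (Submodule.smul_mem _ _ (Submodule.sub_mem _ hb (Submodule.smul_mem _ _ ha)))
      intro i hi
      simp only [Finset.coe_insert, Set.mem_insert_iff]
      exact Or.inr (Or.inr hi)


/-- There is an absolute constant `c > 0` such that for every linear
`(2,δ)`-LDC over a finite field `F` of cardinality `q`, with dimension `k ≥ 2`,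
every `x ∈ Fᵏ` lies in the span of at most `c·q·δ⁻¹·log₂ k` of the rows. -/
theorem stmt9 :
    ∃ c : ℝ, 0 < c ∧
      ∀ (F : Type) [Field F] [Fintype F] [DecidableEq F],
        ∀ (n k : ℕ) (δ : ℝ), 1 ≤ n → 2 ≤ k → 0 < δ → δ < 1 →
          ∀ (v : Fin n → Fin k → F) (H : Fin k → Finset (Finset (Fin n))),
            IsLinearLDC2 F δ v H →
            ∀ x : Fin k → F, ∃ I : Finset (Fin n),
              (I.card : ℝ) ≤ c * (Fintype.card F : ℝ) * δ⁻¹ * Real.logb 2 k ∧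
              x ∈ Submodule.span F (v '' (I : Set (Fin n))) := by
  classical
  refine ⟨4, by norm_num, ?_⟩
  intro F _ _ _ n k δ hn hk hδ hδ1 v H hL x
  have hq1 : (1 : ℝ) ≤ Fintype.card F := by
    exact_mod_cast Nat.succ_le_of_lt (Fintype.card_pos (α := F))
  have hq : (0 : ℝ) < Fintype.card F := by linarith
  have hk2 : (2 : ℝ) ≤ k := by exact_mod_cast hk
  have hk0 : (0 : ℝ) < k := by linarith
  set q : ℝ := (Fintype.card F : ℝ) with hqd
  have hlogb : 1 ≤ Real.logb 2 k := by
    rw [Real.le_logb_iff_rpow_le (by norm_num) hk0]; simpa using hk2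
  have hlog : Real.log k ≤ Real.logb 2 k := by
    have h2 : Real.log 2 ≤ 1 := by linarith [Real.log_two_lt_d9]
    have h2' : 0 < Real.log 2 := Real.log_pos (by norm_num)
    have hk' : 0 ≤ Real.log k := Real.log_nonneg (by linarith)
    rw [Real.logb, le_div_iff₀ h2']
    nlinarith
  have hqδ : 1 ≤ q * δ⁻¹ := by
    have : 1 ≤ δ⁻¹ := (one_le_inv₀ hδ).2 hδ1.le
    nlinarith
  have hlogk0 : 0 ≤ Real.log k := Real.log_nonneg (by linarith)
  have hdq : δ / q ≤ 1 := by rw [div_le_one hq]; linarith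
  set T : ℕ := ⌊q * δ⁻¹ * Real.log k⌋₊ + 1 with hT
  have hT1 : q * δ⁻¹ * Real.log k < T := by
    rw [hT]; push_cast; exact Nat.lt_floor_add_one _
  have hT2 : (T : ℝ) ≤ q * δ⁻¹ * Real.log k + 1 := by
    rw [hT]; push_cast
    have := Nat.floor_le (a := q * δ⁻¹ * Real.log k) (by positivity)
    linarith
  obtain ⟨I, hI, hx⟩ := ldc_iter F δ hn (by linarith) v H hL T x (by
    have hw : ∀ A : Finset (Fin k), (A.card : ℝ) ≤ k := by
      intro A
      have := Finset.card_le_univ A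
      rw [Fintype.card_fin] at this
      exact_mod_cast this
    have h1 : (1 - δ / q) ^ T ≤ Real.exp (-(δ / q) * T) := by
      rw [mul_comm, Real.exp_nat_mul]
      have := Real.add_one_le_exp (-(δ / q))
      exact pow_le_pow_left₀ (by linarith) (by linarith) T
    have h2 : Real.exp (-(δ / q) * T) * k < 1 := by
      have h0 : Real.exp (-(δ / q) * T) * k = Real.exp (-(δ / q) * T + Real.log k) := by
        rw [Real.exp_add, Real.exp_log hk0]
      rw [h0, Real.exp_lt_one_iff]
      have h3 : (δ / q) * (q * δ⁻¹ * Real.log k) < (δ / q) * T :=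
        mul_lt_mul_of_pos_left hT1 (by positivity)
      have h4 : (δ / q) * (q * δ⁻¹ * Real.log k) = Real.log k := by field_simp
      linarith
    calc _ ≤ Real.exp (-(δ / q) * T) * k := mul_le_mul h1 (hw _) (Nat.cast_nonneg _) (Real.exp_pos _).le
      _ < 1 := h2)
  refine ⟨I, ?_, hx⟩
  have hI' : (I.card : ℝ) ≤ 2 * T := by exact_mod_cast hI
  have h5 : q * δ⁻¹ * Real.log k ≤ q * δ⁻¹ * Real.logb 2 k :=
    mul_le_mul_of_nonneg_left hlog (by linarith)
  have h6 : 1 ≤ q * δ⁻¹ * Real.logb 2 k := by nlinarith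
  calc (I.card : ℝ) ≤ 4 * (q * δ⁻¹ * Real.logb 2 k) := by linarith
    _ = _ := by ring
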